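/- The pair (X°,ξ°) is mass-stationary under P° if and only if the pair (X°, ξ°⊗λ₁) is mass-stationary under P°, where ξ°⊗λ₁ is regarded as a random measure on ℝ^{d+1} and the ℝ^{d+1}-shifts act on E through the first d coordinates: θ_{(t_1,…,t_{d+1})}x := θ_{(t_1,…,t_d)}x. -/

import Mathlib

open MeasureTheory ENNReal Set

namespace LT

/-- Points of `ℝ^d`. -/
abbrev Rd (d : ℕ) := Fin d → ℝ

/-- Points of `ℤ^d`. -/
abbrev ZZd (d : ℕ) := Fin d → ℤ

/-- The shift `θ_t ξ`, satisfying `θ_t ξ (B) = ξ (B + t)`. -/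
noncomputable def shiftM {d : ℕ} (t : Rd d) (ξ : Measure (Rd d)) : Measure (Rd d) :=
  Measure.map (fun x => x - t) ξ

/-- A (jointly) measurable action of the additive group `ℝ^d` on a measurable space `E`,
written `θ_t x = act t x`. -/
structure Action (d : ℕ) (E : Type*) [MeasurableSpace E] where
  act : Rd d → E → E
  measurable_act : ∀ t, Measurable (act t)
  act_zero : ∀ x, act 0 x = x
  act_add : ∀ s t x, act s (act t x) = act (s + t) x

/-- The conditional (normalized) measure `ξ(· | A)`. -/
noncomputable def condM {d : ℕ} (ξ : Measure (Rd d)) (A : Set (Rd d)) : Measure (Rd d) :=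
  (ξ A)⁻¹ • ξ.restrict A

/-- `0` lies in the support of `ξ`. -/
def zeroInSupport {d : ℕ} (ξ : Measure (Rd d)) : Prop :=
  ∀ U : Set (Rd d), IsOpen U → (0 : Rd d) ∈ U → 0 < ξ U

variable {d : ℕ} {Ω E : Type*} [MeasurableSpace Ω] [MeasurableSpace E]

/-- The defining identity (1) of mass-stationarity for a fixed set `C` :
`(θ_{V_C}(X,ξ), V_C + U_C) =_D ((X,ξ), U_C)`, where the conditional distribution of `U_C`
given `(X,ξ)` is uniform on `C` and that of `V_C` given `((X,ξ),U_C)` is `ξ(· | C - U_C)`. -/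
def MSIdentity (Θ : Action d E) (P : Measure Ω) (X : Ω → E) (ξ : Ω → Measure (Rd d))
    (C : Set (Rd d)) : Prop :=
  ∀ f : (E × Measure (Rd d)) × Rd d → ℝ≥0∞, Measurable f →
    ∫⁻ ω, (volume C)⁻¹ * ∫⁻ u in C,
        ∫⁻ v, f ((Θ.act v (X ω), shiftM v (ξ ω)), v + u)
          ∂(condM (ξ ω) ((· + u) ⁻¹' C)) ∂volume ∂P
    = ∫⁻ ω, (volume C)⁻¹ * ∫⁻ u in C, f ((X ω, ξ ω), u) ∂volume ∂P

/-- Mass-stationarity of `(X, ξ)` under `P`. -/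
def IsMassStationary (Θ : Action d E) (P : Measure Ω) (X : Ω → E)
    (ξ : Ω → Measure (Rd d)) : Prop :=
  ∀ C : Set (Rd d), MeasurableSet C → Bornology.IsBounded C → 0 < volume C →
    volume (frontier C) = 0 → MSIdentity Θ P X ξ C

/-- Stationarity of the pair `(X, ξ)` under `P`. -/
def IsStationary (Θ : Action d E) (P : Measure Ω) (X : Ω → E)
    (ξ : Ω → Measure (Rd d)) : Prop :=
  ∀ t : Rd d, Measure.map (fun ω => (Θ.act t (X ω), shiftM t (ξ ω))) P
    = Measure.map (fun ω => (X ω, ξ ω)) P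

/-- Stationarity of a random element `X` under `P`. -/
def IsStationaryElem (Θ : Action d E) (P : Measure Ω) (X : Ω → E) : Prop :=
  ∀ t : Rd d, Measure.map (fun ω => Θ.act t (X ω)) P = Measure.map X P

/-- `(Xc, ξc)` under `Pc` is the Palm version of the (stationary) pair `(X, ξ)` under `P`. -/
def IsPalmVersion {Ω' : Type*} [MeasurableSpace Ω']
    (Θ : Action d E) (Pc : Measure Ω) (Xc : Ω → E) (ξc : Ω → Measure (Rd d))
    (P : Measure Ω') (X : Ω' → E) (ξ : Ω' → Measure (Rd d)) : Prop :=
  ∀ f : E × Measure (Rd d) → ℝ≥0∞, Measurable f →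
    ∀ B : Set (Rd d), MeasurableSet B → 0 < volume B → volume B < ⊤ →
      ∫⁻ ω, f (Xc ω, ξc ω) ∂Pc
        = (volume B)⁻¹ * ∫⁻ ω, ∫⁻ t in B, f (Θ.act t (X ω), shiftM t (ξ ω)) ∂(ξ ω) ∂P

end LT
namespace LT

/-- The extension `ξ ⊗ λ₁` of a measure on `ℝ^d` to a measure on `ℝ^{d+1}`. -/
noncomputable def extendM {d : ℕ} (ξm : Measure (Rd d)) : Measure (Rd (d + 1)) :=
  Measure.map (fun p : Rd d × ℝ => Fin.snoc p.1 p.2) (ξm.prod volume)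

/-- Extension of an `ℝ^d`-action on `E` to an `ℝ^{d+1}`-action through the first `d`
coordinates: `θ_{(t₁,…,t_{d+1})} x = θ_{(t₁,…,t_d)} x`. -/
noncomputable def extAction {d : ℕ} {E : Type*} [MeasurableSpace E] (Θ : Action d E) :
    Action (d + 1) E where
  act t x := Θ.act (fun k => t k.castSucc) x
  measurable_act t := Θ.measurable_act _
  act_zero x := by
    show Θ.act (fun k : Fin d => (0 : Rd (d + 1)) k.castSucc) x = x
    have h : (fun k : Fin d => (0 : Rd (d + 1)) k.castSucc) = (0 : Rd d) := rfl
    rw [h, Θ.act_zero]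
  act_add s t x := by
    show Θ.act _ (Θ.act _ x) = Θ.act _ x
    rw [Θ.act_add]
    congr 1

end LT
namespace LT

open ProbabilityTheory

section helpers

/-- annulus -/
def ann (d : ℕ) (n : ℕ) : Set (Rd d) := {x | ⌊‖x‖⌋₊ = n}

lemma measurableSet_ann (d n : ℕ) : MeasurableSet (ann d n) := by
  have : Measurable fun x : Rd d => ⌊‖x‖⌋₊ := Nat.measurable_floor.comp measurable_norm
  exact this (measurableSet_singleton n)

lemma ann_sub (d n : ℕ) : ann d n ⊆ Metric.ball 0 (n + 1 : ℕ) := by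
  intro x hx
  have hx' : ⌊‖x‖⌋₊ = n := hx
  have := Nat.lt_floor_add_one ‖x‖
  rw [hx'] at this
  simpa using this

/-- locally finite measures, described countably -/
def good (d : ℕ) : Set (Measure (Rd d)) := {μ | ∀ n : ℕ, μ (Metric.ball 0 n) < ⊤}

lemma measurableSet_good (d : ℕ) : MeasurableSet (good d) := by
  have : good d = ⋂ n : ℕ, {μ | μ (Metric.ball 0 n) < ⊤} := by ext; simp [good]
  rw [this]
  exact MeasurableSet.iInter fun n =>
    (Measure.measurable_coe measurableSet_ball) measurableSet_Iio

lemma bounded_lt_top {d : ℕ} (μ : Measure (Rd d)) [IsLocallyFiniteMeasure μ] {C : Set (Rd d)}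
    (hC : Bornology.IsBounded C) : μ C < ⊤ :=
  hC.measure_lt_top

lemma mem_good {d : ℕ} (μ : Measure (Rd d)) [IsLocallyFiniteMeasure μ] : μ ∈ good d :=
  fun _ => bounded_lt_top μ Metric.isBounded_ball

/-- pieces of the regularising kernel -/
def cell (d : ℕ) (p : ℕ × ℕ) : Set (Measure (Rd d)) :=
  good d ∩ {μ | ⌊(μ (ann d p.1)).toReal⌋₊ = p.2}

lemma measurableSet_cell (d : ℕ) (p : ℕ × ℕ) : MeasurableSet (cell d p) := by
  refine (measurableSet_good d).inter ?_
  have : Measurable fun μ : Measure (Rd d) => ⌊(μ (ann d p.1)).toReal⌋₊ :=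
    Nat.measurable_floor.comp (Measure.measurable_coe (measurableSet_ann d _)).ennreal_toReal
  exact this (measurableSet_singleton _)

/-- the identity kernel on measures -/
noncomputable def idK (d : ℕ) : Kernel (Measure (Rd d)) (Rd d) := ⟨id, measurable_id⟩

open Classical in
/-- a piece of the regularising kernel -/
noncomputable def pieceK (d : ℕ) (p : ℕ × ℕ) : Kernel (Measure (Rd d)) (Rd d) :=
  Kernel.piecewise (measurableSet_cell d p) ((idK d).restrict (measurableSet_ann d p.1)) 0

open Classical in
lemma pieceK_apply (d : ℕ) (p : ℕ × ℕ) (μ : Measure (Rd d)) :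
    pieceK d p μ = if μ ∈ cell d p then μ.restrict (ann d p.1) else 0 := by
  simp only [pieceK, Kernel.piecewise_apply, Kernel.restrict_apply]
  rfl

instance (d : ℕ) (p : ℕ × ℕ) : IsFiniteKernel (pieceK d p) := by
  refine ⟨⟨(p.2 + 1 : ℕ), ENNReal.natCast_lt_top _, fun μ => ?_⟩⟩
  rw [pieceK_apply]
  split_ifs with h
  · obtain ⟨h1, h2⟩ := h
    have h2' : ⌊(μ (ann d p.1)).toReal⌋₊ = p.2 := h2
    have hfin : μ (ann d p.1) < ⊤ := (measure_mono (ann_sub d p.1)).trans_lt (h1 _)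
    have := (Nat.lt_floor_add_one (μ (ann d p.1)).toReal).le
    rw [h2'] at this
    rw [Measure.restrict_apply_univ, ← ENNReal.ofReal_toReal hfin.ne]
    refine (ENNReal.ofReal_le_ofReal this).trans ?_
    rw [show (p.2 : ℝ) + 1 = ((p.2 + 1 : ℕ) : ℝ) by push_cast; rfl, ENNReal.ofReal_natCast]
  · simp

/-- The regularising kernel: `Kreg μ = μ` if `μ` is locally finite, and `0` otherwise. -/
noncomputable def Kreg (d : ℕ) : Kernel (Measure (Rd d)) (Rd d) := Kernel.sum (pieceK d)

instance (d : ℕ) : IsSFiniteKernel (Kreg d) := Kernel.isSFiniteKernel_sum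

lemma Kreg_of_good {d : ℕ} {μ : Measure (Rd d)} (h : μ ∈ good d) : Kreg d μ = μ := by
  ext s hs
  rw [Kreg, Kernel.sum_apply' _ _ hs, ENNReal.tsum_prod']
  have : ∀ n, ∑' k, pieceK d (n, k) μ s = μ (s ∩ ann d n) := by
    intro n
    rw [tsum_eq_single ⌊(μ (ann d n)).toReal⌋₊]
    · rw [pieceK_apply, if_pos ⟨h, rfl⟩, Measure.restrict_apply hs]
    · intro k hk
      rw [pieceK_apply, if_neg]
      · simp
      · rintro ⟨-, h2⟩
        exact hk h2.symm
  simp_rw [this]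
  rw [← measure_iUnion]
  · congr 1
    ext x
    simp [ann]
  · intro i j hij
    refine Set.disjoint_left.2 ?_
    rintro x ⟨-, h1⟩ ⟨-, h2⟩
    exact hij (h1.symm.trans h2)
  · intro i
    exact hs.inter (measurableSet_ann d i)

lemma Kreg_of_not_good {d : ℕ} {μ : Measure (Rd d)} (h : μ ∉ good d) : Kreg d μ = 0 := by
  ext s hs
  rw [Kreg, Kernel.sum_apply' _ _ hs]
  have : ∀ p, pieceK d p μ s = 0 := by
    intro p
    rw [pieceK_apply, if_neg]
    · simp
    · exact fun h' => h h'.1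
  simp [this]

lemma Kreg_eq {d : ℕ} (μ : Measure (Rd d)) [IsLocallyFiniteMeasure μ] : Kreg d μ = μ :=
  Kreg_of_good (mem_good μ)

lemma Kreg_ball_lt_top {d : ℕ} (μ : Measure (Rd d)) (n : ℕ) :
    Kreg d μ (Metric.ball 0 n) < ⊤ := by
  by_cases h : μ ∈ good d
  · rw [Kreg_of_good h]; exact h n
  · rw [Kreg_of_not_good h]; simp

lemma shiftM_apply {d : ℕ} (t : Rd d) (μ : Measure (Rd d)) {B : Set (Rd d)}
    (hB : MeasurableSet B) : shiftM t μ B = μ ((fun x => x - t) ⁻¹' B) :=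
  Measure.map_apply (measurable_id.sub_const t) hB

lemma lf_of_good {d : ℕ} {μ : Measure (Rd d)} (h : μ ∈ good d) : IsLocallyFiniteMeasure μ := by
  refine ⟨fun x => ⟨Metric.ball 0 (⌊‖x‖⌋₊ + 1 : ℕ), ?_, h _⟩⟩
  refine Metric.isOpen_ball.mem_nhds ?_
  simpa using Nat.lt_floor_add_one ‖x‖

lemma shiftM_lf {d : ℕ} (t : Rd d) (μ : Measure (Rd d)) [IsLocallyFiniteMeasure μ] :
    IsLocallyFiniteMeasure (shiftM t μ) := by
  refine lf_of_good fun n => ?_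
  rw [shiftM_apply _ _ measurableSet_ball]
  refine bounded_lt_top μ ((Metric.isBounded_ball (x := t) (r := n)).subset ?_)
  intro x hx
  simpa [dist_eq_norm] using hx

lemma shiftM_pre {d : ℕ} (v u : Rd d) (μ : Measure (Rd d)) {C : Set (Rd d)}
    (hC : MeasurableSet C) : shiftM v μ ((· + (v + u)) ⁻¹' C) = μ ((· + u) ⁻¹' C) := by
  rw [shiftM_apply _ _ ((measurable_add_const _) hC)]
  congr 1
  ext x
  simp only [mem_preimage]
  rw [show x - v + (v + u) = x + u by abel]

/-- measurability of the shift map along a random measure -/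
lemma measurable_shiftM {d : ℕ} {α : Type*} [MeasurableSpace α] {ξ : α → Measure (Rd d)}
    (hξ : Measurable ξ) (hfin : ∀ a, IsLocallyFiniteMeasure (ξ a)) :
    Measurable fun p : Rd d × α => shiftM p.1 (ξ p.2) := by
  refine Measure.measurable_of_measurable_coe _ fun s hs => ?_
  have hset : MeasurableSet {q : (Rd d × α) × Rd d | q.2 - q.1.1 ∈ s} :=
    (measurable_snd.sub (measurable_fst.fst)) hs
  have := Kernel.measurable_kernel_prodMk_left
    (κ := (Kreg d).comap (fun p : Rd d × α => ξ p.2) (hξ.comp measurable_snd)) hset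
  convert this using 2 with p
  rw [Kernel.comap_apply, @Kreg_eq _ _ (hfin _), shiftM_apply _ _ hs]
  rfl

/-- measurability of `(μ, u) ↦ Kreg μ (C - u)` -/
lemma measurable_KC {d : ℕ} {E : Type*} [MeasurableSpace E] {C : Set (Rd d)}
    (hC : MeasurableSet C) :
    Measurable fun p : (E × Measure (Rd d)) × Rd d => Kreg d p.1.2 ((· + p.2) ⁻¹' C) := by
  have hset : MeasurableSet {q : ((E × Measure (Rd d)) × Rd d) × Rd d | q.2 + q.1.2 ∈ C} :=
    (measurable_snd.add (measurable_fst.snd)) hC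
  have := Kernel.measurable_kernel_prodMk_left
    (κ := (Kreg d).comap (fun p : (E × Measure (Rd d)) × Rd d => p.1.2) measurable_fst.snd) hset
  simp only [Kernel.comap_apply] at this
  exact this

end helpers

end LT
namespace LT

open ProbabilityTheory

section twopoint

/-- The two-point identity, equivalent to mass-stationarity. -/
def TwoPoint {d : ℕ} {Ω E : Type*} [MeasurableSpace Ω] [MeasurableSpace E]
    (Θ : Action d E) (P : Measure Ω) (X : Ω → E) (ξ : Ω → Measure (Rd d)) : Prop :=
  ∀ G : (E × Measure (Rd d)) × (Rd d × Rd d) → ℝ≥0∞, Measurable G →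
    ∫⁻ ω, ∫⁻ v, ∫⁻ w, G ((Θ.act v (X ω), shiftM v (ξ ω)), (w, w - v)) ∂volume ∂(ξ ω) ∂P
      = ∫⁻ ω, ∫⁻ v, ∫⁻ u, G ((X ω, ξ ω), (u, v + u)) ∂volume ∂(ξ ω) ∂P

/-- Standing assumptions. -/
structure Setup {d : ℕ} {Ω E : Type*} [MeasurableSpace Ω] [MeasurableSpace E]
    (Θ : Action d E) (X : Ω → E) (ξ : Ω → Measure (Rd d)) : Prop where
  hX : Measurable X
  hξ : Measurable ξ
  hshift : Measurable fun p : Rd d × Ω => Θ.act p.1 (X p.2)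
  hfin : ∀ ω, IsLocallyFiniteMeasure (ξ ω)

variable {d : ℕ} {Ω E : Type*} [MeasurableSpace Ω] [MeasurableSpace E]
  {Θ : Action d E} {X : Ω → E} {ξ : Ω → Measure (Rd d)}

lemma Setup.meas (h : Setup Θ X ξ) :
    Measurable fun p : Rd d × Ω => (Θ.act p.1 (X p.2), shiftM p.1 (ξ p.2)) :=
  h.hshift.prodMk (measurable_shiftM h.hξ h.hfin)

lemma Setup.meas0 (h : Setup Θ X ξ) (ω : Ω) :
    Measurable fun v : Rd d => (Θ.act v (X ω), shiftM v (ξ ω)) :=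
  h.meas.comp (measurable_id.prodMk measurable_const)

lemma setLint {α : Type*} [MeasurableSpace α] (μ : Measure α) {C : Set α} (hC : MeasurableSet C)
    (f : α → ℝ≥0∞) : ∫⁻ x in C, f x ∂μ = ∫⁻ x, f x * C.indicator 1 x ∂μ := by
  rw [← lintegral_indicator hC]
  refine lintegral_congr fun x => ?_
  by_cases hx : x ∈ C <;> simp [hx]

lemma measurable_ind {α : Type*} [MeasurableSpace α] {C : Set α} (hC : MeasurableSet C) :
    Measurable (C.indicator (1 : α → ℝ≥0∞)) := measurable_one.indicator hC

lemma left_formula (h : Setup Θ X ξ) {C : Set (Rd d)} (hC : MeasurableSet C)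
    {H : (E × Measure (Rd d)) × Rd d → ℝ≥0∞} (hH : Measurable H) (ω : Ω) :
    ∫⁻ u in C, ∫⁻ v in (· + u) ⁻¹' C, H ((Θ.act v (X ω), shiftM v (ξ ω)), v + u) ∂(ξ ω)
      = ∫⁻ v, ∫⁻ w, H ((Θ.act v (X ω), shiftM v (ξ ω)), w)
          * C.indicator 1 w * C.indicator 1 (w - v) ∂volume ∂(ξ ω) := by
  have := h.hfin ω
  have h1 : ∀ u : Rd d, MeasurableSet ((· + u) ⁻¹' C) := fun u => (measurable_add_const u) hC
  rw [setLint _ hC]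
  have h2 : ∀ u, (∫⁻ v in (· + u) ⁻¹' C, H ((Θ.act v (X ω), shiftM v (ξ ω)), v + u) ∂(ξ ω))
        * C.indicator 1 u
      = ∫⁻ v, H ((Θ.act v (X ω), shiftM v (ξ ω)), v + u)
          * C.indicator 1 (v + u) * C.indicator 1 u ∂(ξ ω) := by
    intro u
    rw [setLint _ (h1 u), lintegral_mul_const']
    · rfl
    · by_cases hu : u ∈ C <;> simp [hu]
  simp_rw [h2]
  rw [lintegral_lintegral_swap]
  · refine lintegral_congr fun v => ?_
    rw [← lintegral_sub_right_eq_self _ v]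
    refine lintegral_congr fun w => ?_
    rw [add_sub_cancel]
  · refine Measurable.aemeasurable ?_
    refine Measurable.mul (Measurable.mul ?_ ?_) ?_
    · exact hH.comp (((h.meas0 ω).comp measurable_snd).prodMk
        (measurable_snd.add measurable_fst))
    · exact (measurable_ind hC).comp (measurable_snd.add measurable_fst)
    · exact (measurable_ind hC).comp measurable_fst

lemma right_formula (h : Setup Θ X ξ) {C : Set (Rd d)} (hC : MeasurableSet C)
    {H : (E × Measure (Rd d)) × Rd d → ℝ≥0∞} (hH : Measurable H) (ω : Ω) :
    ∫⁻ u in C, H ((X ω, ξ ω), u) * ξ ω ((· + u) ⁻¹' C)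
      = ∫⁻ v, ∫⁻ u, H ((X ω, ξ ω), u)
          * C.indicator 1 u * C.indicator 1 (v + u) ∂volume ∂(ξ ω) := by
  have := h.hfin ω
  have hm : Measurable fun u => H ((X ω, ξ ω), u) := hH.comp (measurable_const.prodMk measurable_id)
  rw [lintegral_lintegral_swap]
  · rw [setLint _ hC]
    refine lintegral_congr fun u => ?_
    have hmu : Measurable fun v => C.indicator (1 : Rd d → ℝ≥0∞) (v + u) :=
      (measurable_ind hC).comp (measurable_add_const u)
    rw [lintegral_const_mul _ hmu]
    have : ∫⁻ v, C.indicator 1 (v + u) ∂(ξ ω) = ξ ω ((· + u) ⁻¹' C) := by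
      rw [← lintegral_indicator_one ((measurable_add_const u) hC)]
      rfl
    rw [this]
    ring
  · refine Measurable.aemeasurable ?_
    refine Measurable.mul (Measurable.mul ?_ ?_) ?_
    · exact hm.comp measurable_snd
    · exact (measurable_ind hC).comp measurable_snd
    · exact (measurable_ind hC).comp (measurable_fst.add measurable_snd)

/-- Two-point identity implies mass-stationarity. -/
lemma TwoPoint.massStationary (h : Setup Θ X ξ) {P : Measure Ω}
    (hsupp : ∀ᵐ ω ∂P, zeroInSupport (ξ ω)) (hT : TwoPoint Θ P X ξ) :
    IsMassStationary Θ P X ξ := by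
  intro C hC hCb hCpos hCf f hf
  have hc : (volume C)⁻¹ ≠ ⊤ := ENNReal.inv_ne_top.2 hCpos.ne'
  rw [lintegral_const_mul' _ _ hc, lintegral_const_mul' _ _ hc]
  congr 1
  set H : (E × Measure (Rd d)) × Rd d → ℝ≥0∞ :=
    fun p => f p * (Kreg d p.1.2 ((· + p.2) ⁻¹' C))⁻¹ with hHdef
  have hH : Measurable H := by
    exact hf.mul (measurable_KC hC).inv
  have h1 : ∀ u : Rd d, MeasurableSet ((· + u) ⁻¹' C) := fun u => (measurable_add_const u) hC
  have e1 : ∀ ω, ∫⁻ u in C, ∫⁻ v, f ((Θ.act v (X ω), shiftM v (ξ ω)), v + u)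
          ∂(condM (ξ ω) ((· + u) ⁻¹' C))
      = ∫⁻ u in C, ∫⁻ v in (· + u) ⁻¹' C,
          H ((Θ.act v (X ω), shiftM v (ξ ω)), v + u) ∂(ξ ω) := by
    intro ω
    have := h.hfin ω
    refine lintegral_congr fun u => ?_
    rw [condM, lintegral_smul_measure, smul_eq_mul, mul_comm, ← lintegral_mul_const]
    · refine lintegral_congr fun v => ?_
      have := shiftM_lf v (ξ ω)
      simp only [hHdef, Kreg_eq]
      rw [shiftM_pre v u (ξ ω) hC]
    · exact hf.comp ((h.meas0 ω).prodMk (measurable_id.add_const u))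
  simp_rw [e1, left_formula h hC hH]
  have hG : Measurable fun p : (E × Measure (Rd d)) × (Rd d × Rd d) =>
      H (p.1, p.2.1) * C.indicator 1 p.2.1 * C.indicator 1 p.2.2 :=
    ((hH.comp (measurable_fst.prodMk measurable_snd.fst)).mul
      ((measurable_ind hC).comp measurable_snd.fst)).mul
      ((measurable_ind hC).comp measurable_snd.snd)
  rw [hT _ hG]
  refine lintegral_congr_ae ?_
  filter_upwards [hsupp] with ω hω
  have := h.hfin ω
  refine (right_formula h hC hH ω).symm.trans ?_
  refine lintegral_congr_ae ?_
  rw [Filter.EventuallyEq, ae_restrict_iff' hC]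
  have hae : ∀ᵐ u : Rd d, u ∉ frontier C := measure_eq_zero_iff_ae_notMem.1 hCf
  filter_upwards [hae] with u hu huC
  simp only [hHdef, Kreg_eq]
  have hint : u ∈ interior C := by
    by_contra hcon
    exact hu ⟨subset_closure huC, hcon⟩
  have hpos : ξ ω ((· + u) ⁻¹' C) ≠ 0 := by
    have := hω ((· + u) ⁻¹' interior C) (isOpen_interior.preimage (by fun_prop)) (by simpa)
    exact (this.trans_le (measure_mono (preimage_mono interior_subset))).ne'
  have hfin' : ξ ω ((· + u) ⁻¹' C) ≠ ⊤ := by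
    refine (bounded_lt_top (ξ ω) (hCb.sub (Bornology.isBounded_singleton (x := u)) |>.subset ?_)).ne
    intro x hx
    exact ⟨x + u, hx, u, rfl, by simp⟩
  rw [mul_assoc, ENNReal.inv_mul_cancel hpos hfin', mul_one]

/-- Mass-stationarity gives the two-point identity for special functions. -/
lemma massStationary_special (h : Setup Θ X ξ) {P : Measure Ω}
    (hM : IsMassStationary Θ P X ξ) {C : Set (Rd d)} (hC : MeasurableSet C)
    (hCb : Bornology.IsBounded C) (hCf : volume (frontier C) = 0)
    {H : (E × Measure (Rd d)) × Rd d → ℝ≥0∞} (hH : Measurable H) :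
    ∫⁻ ω, ∫⁻ v, ∫⁻ w, H ((Θ.act v (X ω), shiftM v (ξ ω)), w)
          * C.indicator 1 w * C.indicator 1 (w - v) ∂volume ∂(ξ ω) ∂P
      = ∫⁻ ω, ∫⁻ v, ∫⁻ u, H ((X ω, ξ ω), u)
          * C.indicator 1 u * C.indicator 1 (v + u) ∂volume ∂(ξ ω) ∂P := by
  simp_rw [← left_formula h hC hH, ← right_formula h hC hH]
  rcases eq_or_ne (volume C) 0 with h0 | h0
  · simp [Measure.restrict_eq_zero.2 h0]
  set f : (E × Measure (Rd d)) × Rd d → ℝ≥0∞ :=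
    fun p => H p * (Kreg d p.1.2 ((· + p.2) ⁻¹' C)) with hfdef
  have hf : Measurable f := by
    exact hH.mul (measurable_KC hC)
  have key := hM C hC hCb (pos_iff_ne_zero.2 h0) hCf f hf
  have hc : (volume C)⁻¹ ≠ ⊤ := ENNReal.inv_ne_top.2 h0
  have hc0 : (volume C)⁻¹ ≠ 0 := ENNReal.inv_ne_zero.2 (bounded_lt_top volume hCb).ne
  rw [lintegral_const_mul' _ _ hc, lintegral_const_mul' _ _ hc,
    ENNReal.mul_right_inj hc0 hc] at key
  refine Eq.trans ?_ (key.trans ?_)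
  · refine lintegral_congr fun ω => lintegral_congr fun u => ?_
    have := h.hfin ω
    have hfin' : ξ ω ((· + u) ⁻¹' C) ≠ ⊤ := by
      refine (bounded_lt_top (ξ ω)
        (hCb.sub (Bornology.isBounded_singleton (x := u)) |>.subset ?_)).ne
      intro x hx
      exact ⟨x + u, hx, u, rfl, by simp⟩
    rw [condM, lintegral_smul_measure, smul_eq_mul]
    have e : ∀ v, f ((Θ.act v (X ω), shiftM v (ξ ω)), v + u)
        = H ((Θ.act v (X ω), shiftM v (ξ ω)), v + u) * ξ ω ((· + u) ⁻¹' C) := by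
      intro v
      have := shiftM_lf v (ξ ω)
      simp only [hfdef, Kreg_eq]
      rw [shiftM_pre v u (ξ ω) hC]
    simp_rw [e]
    rw [lintegral_mul_const' _ _ hfin']
    rcases eq_or_ne (ξ ω ((· + u) ⁻¹' C)) 0 with hz | hz
    · simp [Measure.restrict_eq_zero.2 hz]
    · rw [mul_comm, mul_assoc, ENNReal.mul_inv_cancel hz hfin', mul_one]
  · refine lintegral_congr fun ω => lintegral_congr fun u => ?_
    have := h.hfin ω
    simp only [hfdef, Kreg_eq]

end twopoint

end LT
namespace LT

open ProbabilityTheory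

section nice

/-- Borel sets with null boundary. -/
def nice (d : ℕ) : Set (Set (Rd d)) := {A | MeasurableSet A ∧ volume (frontier A) = 0}

lemma nice_inter {d : ℕ} {A B : Set (Rd d)} (hA : A ∈ nice d) (hB : B ∈ nice d) :
    A ∩ B ∈ nice d := by
  refine ⟨hA.1.inter hB.1, measure_mono_null (frontier_inter_subset A B) ?_⟩
  exact measure_union_null (measure_mono_null inter_subset_left hA.2)
    (measure_mono_null inter_subset_right hB.2)

lemma nice_compl {d : ℕ} {A : Set (Rd d)} (hA : A ∈ nice d) : Aᶜ ∈ nice d :=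
  ⟨hA.1.compl, by rw [frontier_compl]; exact hA.2⟩

lemma nice_union {d : ℕ} {A B : Set (Rd d)} (hA : A ∈ nice d) (hB : B ∈ nice d) :
    A ∪ B ∈ nice d := by
  have := nice_compl (nice_inter (nice_compl hA) (nice_compl hB))
  rwa [compl_inter, compl_compl, compl_compl] at this

lemma nice_diff {d : ℕ} {A B : Set (Rd d)} (hA : A ∈ nice d) (hB : B ∈ nice d) :
    A \ B ∈ nice d := nice_inter hA (nice_compl hB)

lemma nice_ball {d : ℕ} (x : Rd d) (r : ℝ) : Metric.ball x r ∈ nice d :=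
  ⟨measurableSet_ball, (convex_ball x r).addHaar_frontier volume⟩

lemma nice_univ {d : ℕ} : (univ : Set (Rd d)) ∈ nice d := ⟨MeasurableSet.univ, by simp⟩

lemma nice_pi (d : ℕ) : IsPiSystem (nice d) := fun _ hA _ hB _ => nice_inter hA hB

lemma nice_gen (d : ℕ) :
    MeasurableSpace.generateFrom (nice d) = (inferInstance : MeasurableSpace (Rd d)) := by
  refine le_antisymm (MeasurableSpace.generateFrom_le fun A hA => hA.1) ?_
  rw [show (inferInstance : MeasurableSpace (Rd d)) = borel (Rd d) from BorelSpace.measurable_eq]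
  refine MeasurableSpace.generateFrom_le fun U hU => ?_
  have hU' : IsOpen U := hU
  have hr : ∀ x : U, ∃ r > 0, Metric.ball (x : Rd d) r ⊆ U :=
    fun x => Metric.isOpen_iff.1 hU' x x.2
  choose r hr0 hrU using hr
  obtain ⟨T, hT, hTU⟩ := TopologicalSpace.isOpen_iUnion_countable
    (fun x : U => Metric.ball (x : Rd d) (r x)) (fun _ => Metric.isOpen_ball)
  have : U = ⋃ i ∈ T, Metric.ball (i : Rd d) (r i) := by
    rw [hTU]
    refine subset_antisymm (fun x hx => ?_) (iUnion_subset hrU)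
    exact mem_iUnion.2 ⟨⟨x, hx⟩, Metric.mem_ball_self (hr0 _)⟩
  rw [this]
  exact MeasurableSet.biUnion hT fun i _ => MeasurableSpace.measurableSet_generateFrom (nice_ball _ _)

end nice

section uniq

variable {d : ℕ} {Ω E : Type*} [MeasurableSpace Ω] [MeasurableSpace E]
  {Θ : Action d E} {X : Ω → E} {ξ : Ω → Measure (Rd d)}

/-- the random measure as a kernel -/
noncomputable def Setup.ker (h : Setup Θ X ξ) : Kernel Ω (Rd d) := (Kreg d).comap ξ h.hξ

instance (h : Setup Θ X ξ) : IsSFiniteKernel h.ker := by unfold Setup.ker; infer_instance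

lemma Setup.ker_apply (h : Setup Θ X ξ) (ω : Ω) : h.ker ω = ξ ω := by
  have := h.hfin ω
  rw [Setup.ker, Kernel.comap_apply, Kreg_eq]

lemma lint_triple (h : Setup Θ X ξ) (P : Measure Ω) [SFinite P] {g : (Ω × Rd d) × Rd d → ℝ≥0∞}
    (hg : Measurable g) :
    ∫⁻ q, g q ∂((P ⊗ₘ h.ker).prod volume)
      = ∫⁻ ω, ∫⁻ v, ∫⁻ w, g ((ω, v), w) ∂volume ∂(ξ ω) ∂P := by
  rw [lintegral_prod _ hg.aemeasurable, Measure.lintegral_compProd hg.lintegral_prod_right']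
  simp_rw [h.ker_apply]

/-- left map -/
noncomputable def mapL (Θ : Action d E) (X : Ω → E) (ξ : Ω → Measure (Rd d)) (q : (Ω × Rd d) × Rd d) :
    (E × Measure (Rd d)) × (Rd d × Rd d) :=
  ((Θ.act q.1.2 (X q.1.1), shiftM q.1.2 (ξ q.1.1)), (q.2, q.2 - q.1.2))

/-- right map -/
def mapR (X : Ω → E) (ξ : Ω → Measure (Rd d)) (q : (Ω × Rd d) × Rd d) :
    (E × Measure (Rd d)) × (Rd d × Rd d) :=
  ((X q.1.1, ξ q.1.1), (q.2, q.1.2 + q.2))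

lemma Setup.measL (h : Setup Θ X ξ) : Measurable (mapL Θ X ξ) :=
  (h.meas.comp (measurable_fst.snd.prodMk measurable_fst.fst)).prodMk
    (measurable_snd.prodMk (measurable_snd.sub measurable_fst.snd))

lemma Setup.measR (h : Setup Θ X ξ) : Measurable (mapR X ξ) :=
  ((h.hX.comp measurable_fst.fst).prodMk (h.hξ.comp measurable_fst.fst)).prodMk
    (measurable_snd.prodMk (measurable_fst.snd.add measurable_snd))

lemma lintL (h : Setup Θ X ξ) (P : Measure Ω) [SFinite P]
    {G : (E × Measure (Rd d)) × (Rd d × Rd d) → ℝ≥0∞} (hG : Measurable G) :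
    ∫⁻ p, G p ∂(Measure.map (mapL Θ X ξ) ((P ⊗ₘ h.ker).prod volume))
    = ∫⁻ ω, ∫⁻ v, ∫⁻ w, G ((Θ.act v (X ω), shiftM v (ξ ω)), (w, w - v))
        ∂volume ∂(ξ ω) ∂P := by
  rw [lintegral_map hG h.measL, lint_triple h P (g := fun q => G (mapL Θ X ξ q)) (hG.comp h.measL)]
  rfl

lemma lintR (h : Setup Θ X ξ) (P : Measure Ω) [SFinite P]
    {G : (E × Measure (Rd d)) × (Rd d × Rd d) → ℝ≥0∞} (hG : Measurable G) :
    ∫⁻ p, G p ∂(Measure.map (mapR X ξ) ((P ⊗ₘ h.ker).prod volume))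
    = ∫⁻ ω, ∫⁻ v, ∫⁻ u, G ((X ω, ξ ω), (u, v + u)) ∂volume ∂(ξ ω) ∂P := by
  rw [lintegral_map hG h.measR, lint_triple h P (g := fun q => G (mapR X ξ q)) (hG.comp h.measR)]
  rfl

lemma meas_trunc (ν : Measure (E × Measure (Rd d))) [SigmaFinite ν] (k r m : ℕ) :
    MeasurableSet (spanningSets ν k ∩ {p | Kreg d p.2 (Metric.ball 0 (r : ℕ)) ≤ m}) := by
  refine (measurableSet_spanningSets ν k).inter ?_
  have : Measurable fun p : E × Measure (Rd d) => Kreg d p.2 (Metric.ball 0 (r : ℕ)) :=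
    (Kernel.measurable_coe (Kreg d) measurableSet_ball).comp measurable_snd
  exact this measurableSet_Iic

lemma massStationary_rect (h : Setup Θ X ξ) (P : Measure Ω) [SFinite P]
    (hM : IsMassStationary Θ P X ξ) {F : Set (E × Measure (Rd d))} (hF : MeasurableSet F)
    {A C : Set (Rd d)} (hA : MeasurableSet A) (hAC : A ⊆ C) (hC : C ∈ nice d)
    (hCb : Bornology.IsBounded C) :
    Measure.map (mapL Θ X ξ) ((P ⊗ₘ h.ker).prod volume) (F ×ˢ (A ×ˢ C))
      = Measure.map (mapR X ξ) ((P ⊗ₘ h.ker).prod volume) (F ×ˢ (A ×ˢ C)) := by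
  have hS : MeasurableSet (F ×ˢ (A ×ˢ C)) := hF.prod (hA.prod hC.1)
  rw [← lintegral_indicator_one hS, ← lintegral_indicator_one hS,
    lintL h P (measurable_ind hS), lintR h P (measurable_ind hS)]
  have hH : Measurable fun p : (E × Measure (Rd d)) × Rd d =>
      (F.indicator 1 p.1 * A.indicator 1 p.2 : ℝ≥0∞) :=
    ((measurable_ind hF).comp measurable_fst).mul ((measurable_ind hA).comp measurable_snd)
  have key := massStationary_special h hM hC.1 hCb hC.2 hH
  have e : ∀ (p : E × Measure (Rd d)) (a b : Rd d),
      (F ×ˢ (A ×ˢ C)).indicator 1 (p, (a, b))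
      = (F.indicator 1 p * A.indicator 1 a
        * C.indicator 1 a * C.indicator 1 b : ℝ≥0∞) := by
    intro p a b
    by_cases hp : p ∈ F <;> by_cases ha : a ∈ A <;> by_cases hb : b ∈ C <;>
      simp [hp, ha, hb, indicator]
    all_goals exact hAC ha
  simp_rw [e]
  exact key

lemma finiteR (h : Setup Θ X ξ) (P : Measure Ω) [SFinite P]
    {F : Set (E × Measure (Rd d))} (hF : MeasurableSet F) (n m : ℕ)
    (hF1 : Measure.map (fun ω => (X ω, ξ ω)) P F < ⊤)
    (hF2 : ∀ p ∈ F, Kreg d p.2 (Metric.ball 0 (2 * n : ℕ)) ≤ m) :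
    Measure.map (mapR X ξ) ((P ⊗ₘ h.ker).prod volume)
      (F ×ˢ (Metric.ball 0 n ×ˢ Metric.ball 0 n)) < ⊤ := by
  have hS : MeasurableSet (F ×ˢ ((Metric.ball (0 : Rd d) n) ×ˢ (Metric.ball (0 : Rd d) n))) :=
    hF.prod (measurableSet_ball.prod measurableSet_ball)
  rw [← lintegral_indicator_one hS, lintR h P (measurable_ind hS)]
  set D : ℝ≥0∞ := m * volume (Metric.ball (0 : Rd d) n) with hD
  have hDt : D ≠ ⊤ := ENNReal.mul_ne_top (by simp) (bounded_lt_top _ Metric.isBounded_ball).ne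
  have hXm : Measurable fun ω => (X ω, ξ ω) := h.hX.prodMk h.hξ
  have bd : ∀ ω, (∫⁻ v, ∫⁻ u, (F ×ˢ ((Metric.ball (0 : Rd d) n) ×ˢ
      (Metric.ball (0 : Rd d) n))).indicator 1 ((X ω, ξ ω), (u, v + u))
      ∂volume ∂(ξ ω)) ≤ D * F.indicator 1 (X ω, ξ ω) := by
    intro ω
    have := h.hfin ω
    by_cases hω : (X ω, ξ ω) ∈ F
    · have hb := hF2 _ hω
      simp only [Kreg_eq] at hb
      rw [indicator_of_mem hω, Pi.one_apply, mul_one]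
      calc _ ≤ ∫⁻ v, ∫⁻ u, (Metric.ball (0 : Rd d) (2 * n : ℕ)).indicator 1 v
              * (Metric.ball (0 : Rd d) n).indicator 1 u ∂volume ∂(ξ ω) := by
            refine lintegral_mono fun v => lintegral_mono fun u => ?_
            refine indicator_le' (f := 1) (g := fun p : (E × Measure (Rd d)) × (Rd d × Rd d) =>
              (Metric.ball (0 : Rd d) (2 * n : ℕ)).indicator 1 (p.2.2 - p.2.1)
              * (Metric.ball (0 : Rd d) n).indicator 1 p.2.1) ?_ ?_ _ |>.trans ?_
            · rintro ⟨p, a, b⟩ ⟨-, ha, hb'⟩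
              have ha' : a ∈ Metric.ball (0 : Rd d) n := ha
              have hb'' : b ∈ Metric.ball (0 : Rd d) n := hb'
              have hab : b - a ∈ Metric.ball (0 : Rd d) (2 * n : ℕ) := by
                rw [mem_ball_zero_iff] at *
                refine (norm_sub_le b a).trans_lt ?_
                push_cast
                linarith
              simp only [indicator_of_mem ha', indicator_of_mem hab]
              simp
            · intro _ _
              exact zero_le
            · simp
        _ = ξ ω (Metric.ball (0 : Rd d) (2 * n : ℕ)) * volume (Metric.ball (0 : Rd d) n) := by
            simp_rw [lintegral_const_mul _ (measurable_ind (measurableSet_ball (x := (0 : Rd d)))),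
              lintegral_indicator_one (measurableSet_ball (x := (0 : Rd d)))]
            rw [lintegral_mul_const _ (measurable_ind (measurableSet_ball (x := (0 : Rd d)))),
              lintegral_indicator_one (measurableSet_ball (x := (0 : Rd d)))]
        _ ≤ D := by rw [hD]; gcongr
    · have : ∀ a b : Rd d, (F ×ˢ ((Metric.ball (0 : Rd d) n) ×ˢ
          (Metric.ball (0 : Rd d) n))).indicator 1 ((X ω, ξ ω), (a, b)) = (0 : ℝ≥0∞) := by
        intro a b
        exact indicator_of_notMem (fun hc => hω hc.1) _
      simp [this]
  refine (lintegral_mono bd).trans_lt ?_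
  rw [lintegral_const_mul' _ _ hDt]
  refine ENNReal.mul_lt_top hDt.lt_top ?_
  rw [← lintegral_map (f := F.indicator 1) (measurable_ind hF) hXm, lintegral_indicator_one hF]
  exact hF1

lemma massStationary_rect' (h : Setup Θ X ξ) (P : Measure Ω) [SFinite P]
    (hM : IsMassStationary Θ P X ξ) {F : Set (E × Measure (Rd d))} (hF : MeasurableSet F)
    {A B Q : Set (Rd d)} (hA : A ∈ nice d) (hB : B ∈ nice d) (hQ : Bornology.IsBounded Q)
    (hAQ : A ⊆ Q) (hBQ : B ⊆ Q)
    (hfin : Measure.map (mapR X ξ) ((P ⊗ₘ h.ker).prod volume) (F ×ˢ (Q ×ˢ Q)) < ⊤) :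
    Measure.map (mapL Θ X ξ) ((P ⊗ₘ h.ker).prod volume) (F ×ˢ (A ×ˢ B))
      = Measure.map (mapR X ξ) ((P ⊗ₘ h.ker).prod volume) (F ×ˢ (A ×ˢ B)) := by
  have base : ∀ {A C : Set (Rd d)}, MeasurableSet A → A ⊆ C → C ∈ nice d →
      Bornology.IsBounded C → Measure.map (mapL Θ X ξ) ((P ⊗ₘ h.ker).prod volume) (F ×ˢ (A ×ˢ C))
      = Measure.map (mapR X ξ) ((P ⊗ₘ h.ker).prod volume) (F ×ˢ (A ×ˢ C)) :=
    fun h1 h2 h3 h4 => massStationary_rect h P hM hF h1 h2 h3 h4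
  generalize Measure.map (mapL Θ X ξ) ((P ⊗ₘ h.ker).prod volume) = ν1 at *
  generalize Measure.map (mapR X ξ) ((P ⊗ₘ h.ker).prod volume) = ν2 at *
  have split1 : ∀ ν : Measure ((E × Measure (Rd d)) × (Rd d × Rd d)),
      ν (F ×ˢ (A ×ˢ B)) = ν (F ×ˢ ((A ∩ B) ×ˢ B)) + ν (F ×ˢ ((A \ B) ×ˢ B)) := by
    intro ν
    rw [← measure_union]
    · rw [← prod_union, ← union_prod, inter_union_sdiff]
    · refine Set.disjoint_left.2 ?_
      rintro ⟨p, a, b⟩ h1 h2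
      exact h2.2.1.2 h1.2.1.2
    · exact hF.prod ((hA.1.diff hB.1).prod hB.1)
  have hD := nice_diff hA hB
  have hDb : Bornology.IsBounded (A \ B) := hQ.subset (sdiff_subset.trans hAQ)
  have split2 : ∀ ν : Measure ((E × Measure (Rd d)) × (Rd d × Rd d)),
      ν (F ×ˢ ((A \ B) ×ˢ (A \ B ∪ B)))
        = ν (F ×ˢ ((A \ B) ×ˢ (A \ B))) + ν (F ×ˢ ((A \ B) ×ˢ B)) := by
    intro ν
    rw [← measure_union]
    · rw [← prod_union, ← prod_union]
    · refine Set.disjoint_left.2 ?_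
      rintro ⟨p, a, b⟩ h1 h2
      exact h1.2.2.2 h2.2.2
    · exact hF.prod (hD.1.prod hB.1)
  have e1 := base (hA.1.inter hB.1) inter_subset_right hB (hQ.subset hBQ)
  have e2 := base hD.1 subset_union_left (nice_union hD hB) (hDb.union (hQ.subset hBQ))
  have e3 := base hD.1 subset_rfl hD hDb
  rw [split2, split2, e3] at e2
  have hne : ν2 (F ×ˢ ((A \ B) ×ˢ (A \ B))) ≠ ⊤ := by
    refine ((measure_mono ?_).trans_lt hfin).ne
    have : A \ B ⊆ Q := sdiff_subset.trans hAQ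
    gcongr
  rw [ENNReal.add_right_inj hne] at e2
  rw [split1, split1, e1, e2]

/-- Mass-stationarity implies the two-point identity. -/
lemma twoPoint_of_massStationary (h : Setup Θ X ξ) (P : Measure Ω) [SFinite P]
    (hσ : SigmaFinite (Measure.map (fun ω => (X ω, ξ ω)) P))
    (hM : IsMassStationary Θ P X ξ) : TwoPoint Θ P X ξ := by
  suffices heq : Measure.map (mapL Θ X ξ) ((P ⊗ₘ h.ker).prod volume)
      = Measure.map (mapR X ξ) ((P ⊗ₘ h.ker).prod volume) by
    intro G hG
    rw [← lintL h P hG, ← lintR h P hG, heq]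
  set ν1 := Measure.map (mapL Θ X ξ) ((P ⊗ₘ h.ker).prod volume) with hν1
  set ν2 := Measure.map (mapR X ξ) ((P ⊗ₘ h.ker).prod volume) with hν2
  set law := Measure.map (fun ω => (X ω, ξ ω)) P with hlaw
  set T : ℕ × ℕ × ℕ → Set (E × Measure (Rd d)) := fun i =>
    spanningSets law i.1 ∩ {p | Kreg d p.2 (Metric.ball 0 (2 * i.2.1 : ℕ)) ≤ i.2.2} with hT
  set S : ℕ × ℕ × ℕ → Set ((E × Measure (Rd d)) × (Rd d × Rd d)) := fun i =>
    T i ×ˢ (Metric.ball (0 : Rd d) i.2.1 ×ˢ Metric.ball (0 : Rd d) i.2.1) with hS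
  have hTm : ∀ i, MeasurableSet (T i) := fun i => meas_trunc law i.1 _ _
  have hSm : ∀ i, MeasurableSet (S i) := fun i =>
    (hTm i).prod (measurableSet_ball.prod measurableSet_ball)
  have hcov : ⋃ i, S i = univ := by
    refine eq_univ_of_forall ?_
    rintro ⟨p, a, b⟩
    obtain ⟨k, hk⟩ := mem_iUnion.1 ((iUnion_spanningSets law).symm ▸ mem_univ p :
      p ∈ ⋃ k, spanningSets law k)
    obtain ⟨n, hn⟩ := exists_nat_gt (max ‖a‖ ‖b‖)
    obtain ⟨m, hm⟩ := ENNReal.exists_nat_gt (Kreg_ball_lt_top p.2 (2 * n)).ne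
    refine mem_iUnion.2 ⟨(k, n, m), ⟨hk, hm.le⟩, ?_, ?_⟩
    · exact mem_ball_zero_iff.2 ((le_max_left _ _).trans_lt hn)
    · exact mem_ball_zero_iff.2 ((le_max_right _ _).trans_lt hn)
  have hfin : ∀ i, ∀ F ⊆ T i, MeasurableSet F →
      ν2 (F ×ˢ (Metric.ball (0 : Rd d) i.2.1 ×ˢ Metric.ball (0 : Rd d) i.2.1)) < ⊤ := by
    intro i F hFT hF
    refine finiteR h P hF i.2.1 i.2.2 ?_ fun p hp => (hFT hp).2
    exact (measure_mono (hFT.trans inter_subset_left)).trans_lt (measure_spanningSets_lt_top law _)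
  have hrect : ∀ i, ∀ F : Set (E × Measure (Rd d)), MeasurableSet F → ∀ A ∈ nice d, ∀ B ∈ nice d,
      ν2.restrict (S i) (F ×ˢ (A ×ˢ B)) = ν1.restrict (S i) (F ×ˢ (A ×ˢ B)) := by
    intro i F hF A hA B hB
    have hm : MeasurableSet (F ×ˢ (A ×ˢ B)) := hF.prod (hA.1.prod hB.1)
    rw [Measure.restrict_apply hm, Measure.restrict_apply hm]
    simp only [hS]
    rw [prod_inter_prod, prod_inter_prod]
    refine (massStationary_rect' h P hM (hF.inter (hTm i)) (nice_inter hA (nice_ball _ _))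
      (nice_inter hB (nice_ball _ _)) Metric.isBounded_ball inter_subset_right
      inter_subset_right (hfin i _ inter_subset_right (hF.inter (hTm i)))).symm
  rw [← Measure.restrict_univ (μ := ν1), ← Measure.restrict_univ (μ := ν2), ← hcov,
    Measure.restrict_iUnion_congr]
  intro i
  symm
  have : IsFiniteMeasure (ν2.restrict (S i)) :=
    ⟨by rw [Measure.restrict_apply_univ]; exact hfin i _ subset_rfl (hTm i)⟩
  have hspan : IsCountablySpanning (nice d) := ⟨fun _ => univ, fun _ => nice_univ, iUnion_const _⟩
  have hspan2 : IsCountablySpanning (image2 (fun x1 x2 => x1 ×ˢ x2) (nice d) (nice d)) :=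
    ⟨fun _ => univ, fun _ => ⟨univ, nice_univ, univ, nice_univ, univ_prod_univ⟩, iUnion_const _⟩
  refine ext_of_generate_finite
    (image2 (fun x1 x2 => x1 ×ˢ x2) {s : Set (E × Measure (Rd d)) | MeasurableSet s}
      (image2 (fun x1 x2 => x1 ×ˢ x2) (nice d) (nice d))) ?_ ?_ ?_ ?_
  · refine (generateFrom_eq_prod MeasurableSpace.generateFrom_measurableSet ?_
      isCountablySpanning_measurableSet hspan2).symm
    exact generateFrom_eq_prod (nice_gen d) (nice_gen d) hspan hspan
  · exact MeasurableSpace.isPiSystem_measurableSet.prod ((nice_pi d).prod (nice_pi d))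
  · rintro s ⟨F, hF, R, ⟨A, hA, B, hB, rfl⟩, rfl⟩
    exact hrect i F hF A hA B hB
  · have := hrect i univ MeasurableSet.univ univ nice_univ univ nice_univ
    simpa only [univ_prod_univ] using this

end uniq

end LT
namespace LT

open ProbabilityTheory

section ext

variable {d : ℕ}

/-- the append map -/
def sn (w : Rd d) (r : ℝ) : Rd (d + 1) := Fin.snoc w r

lemma measurable_sn : Measurable fun p : Rd d × ℝ => sn p.1 p.2 := by
  refine measurable_pi_lambda _ fun i => ?_
  refine Fin.lastCases ?_ (fun k => ?_) i
  · simpa [sn] using measurable_snd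
  · have : Measurable fun c : Rd d × ℝ => c.1 k := (measurable_pi_apply k).comp measurable_fst
    simpa [sn] using this

lemma sn_castSucc (w : Rd d) (r : ℝ) : (fun k : Fin d => sn w r k.castSucc) = w := by
  funext k; simp [sn]

lemma sn_last (w : Rd d) (r : ℝ) : sn w r (Fin.last d) = r := by simp [sn]

lemma sn_sub (w v : Rd d) (r s : ℝ) : sn w r - sn v s = sn (w - v) (r - s) := by
  funext i
  refine Fin.lastCases ?_ (fun k => ?_) i <;> simp [sn]

lemma sn_add (w v : Rd d) (r s : ℝ) : sn w r + sn v s = sn (w + v) (r + s) := by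
  funext i
  refine Fin.lastCases ?_ (fun k => ?_) i <;> simp [sn]

lemma measurable_extendM : Measurable (extendM (d := d)) := by
  refine (Measure.measurable_map _ measurable_sn).comp ?_
  simp only [Measure.prod_def]
  exact Measure.measurable_bind'
    (Measurable.map_prodMk_left (α := Rd d) (ν := (volume : Measure ℝ)))

lemma volume_eq : (volume : Measure (Rd (d + 1))) = extendM volume := by
  have h := (volume_preserving_piFinSuccAbove (fun _ : Fin (d + 1) => ℝ) (Fin.last d)).symm
  have h2 := h.comp (Measure.measurePreserving_swap (μ := (volume : Measure (Rd d)))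
    (ν := (volume : Measure ℝ)))
  rw [← h2.map_eq, extendM]
  congr 1
  funext p
  simp only [Function.comp]
  exact Fin.insertNth_last' _ _

lemma lint_ext (μ : Measure (Rd d)) {g : Rd (d + 1) → ℝ≥0∞} (hg : Measurable g) :
    ∫⁻ x, g x ∂(extendM μ) = ∫⁻ v, ∫⁻ s, g (sn v s) ∂volume ∂μ := by
  have : extendM μ = Measure.map (fun p : Rd d × ℝ => sn p.1 p.2) (μ.prod volume) := rfl
  have hm : Measurable fun p : Rd d × ℝ => g (sn p.1 p.2) := hg.comp measurable_sn
  rw [this, lintegral_map hg measurable_sn, lintegral_prod _ hm.aemeasurable]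

lemma lint_vol {g : Rd (d + 1) → ℝ≥0∞} (hg : Measurable g) :
    ∫⁻ x, g x = ∫⁻ w : Rd d, ∫⁻ r : ℝ, g (sn w r) := by
  rw [volume_eq, lint_ext _ hg]

lemma extendM_apply_rect (μ : Measure (Rd d)) {B : Set (Rd d)} (hB : MeasurableSet B)
    {I : Set ℝ} (hI : MeasurableSet I) :
    extendM μ {x | (fun k : Fin d => x k.castSucc) ∈ B ∧ x (Fin.last d) ∈ I}
      = μ B * volume I := by
  have : extendM μ = Measure.map (fun p : Rd d × ℝ => sn p.1 p.2) (μ.prod volume) := rfl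
  have hm : MeasurableSet {x : Rd (d + 1) |
      (fun k : Fin d => x k.castSucc) ∈ B ∧ x (Fin.last d) ∈ I} := by
    refine MeasurableSet.inter ?_ ?_
    · exact (measurable_pi_lambda _ fun k => measurable_pi_apply _ :
        Measurable fun (x : Rd (d + 1)) (k : Fin d) => x k.castSucc) hB
    · exact (measurable_pi_apply _ : Measurable fun (x : Rd (d + 1)) => x (Fin.last d)) hI
  rw [this, Measure.map_apply measurable_sn hm, ← Measure.prod_prod]
  congr 1
  ext p
  simp [sn_castSucc, sn_last]

/-- left inverse of `extendM` -/
noncomputable def rho (η : Measure (Rd (d + 1))) : Measure (Rd d) :=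
  Measure.map (fun x k => x (Fin.castSucc k)) (η.restrict {x | x (Fin.last d) ∈ Icc (0 : ℝ) 1})

lemma measurable_init : Measurable fun (x : Rd (d + 1)) (k : Fin d) => x k.castSucc :=
  measurable_pi_lambda _ fun _ => measurable_pi_apply _

lemma measurable_lst : Measurable fun (x : Rd (d + 1)) => x (Fin.last d) :=
  measurable_pi_apply _

lemma rho_apply (η : Measure (Rd (d + 1))) {B : Set (Rd d)} (hB : MeasurableSet B) :
    rho η B = η {x | (fun k : Fin d => x k.castSucc) ∈ B ∧ x (Fin.last d) ∈ Icc (0 : ℝ) 1} := by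
  rw [rho, Measure.map_apply measurable_init hB, Measure.restrict_apply (measurable_init hB)]
  rfl

lemma measurable_rho : Measurable (rho (d := d)) := by
  refine Measure.measurable_of_measurable_coe _ fun B hB => ?_
  simp_rw [rho_apply _ hB]
  exact Measure.measurable_coe ((measurable_init hB).inter (measurable_lst measurableSet_Icc))

lemma rho_extendM (μ : Measure (Rd d)) : rho (extendM μ) = μ := by
  ext B hB
  rw [rho_apply _ hB, extendM_apply_rect _ hB measurableSet_Icc]
  simp

lemma shiftM_extendM (v : Rd d) (s : ℝ) (μ : Measure (Rd d)) [IsLocallyFiniteMeasure μ] :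
    shiftM (sn v s) (extendM μ) = extendM (shiftM v μ) := by
  have hm1 : Measurable fun x : Rd d => x - v := measurable_id.sub_const v
  have hm2 : Measurable fun x : ℝ => x - s := measurable_id.sub_const s
  have hm3 : Measurable fun x : Rd (d + 1) => x - sn v s := measurable_id.sub_const _
  have hv : Measure.map (fun x : ℝ => x - s) volume = volume :=
    (measurePreserving_sub_right volume s).map_eq
  have e1 : extendM (shiftM v μ) = Measure.map (fun p : Rd d × ℝ => sn p.1 p.2)
      ((Measure.map (fun x => x - v) μ).prod (Measure.map (fun x : ℝ => x - s) volume)) := by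
    rw [hv]; rfl
  have e2 : extendM μ = Measure.map (fun p : Rd d × ℝ => sn p.1 p.2) (μ.prod volume) := rfl
  rw [e1, e2, shiftM, Measure.map_map hm3 measurable_sn,
    Measure.map_prod_map _ _ hm1 hm2, Measure.map_map measurable_sn (hm1.prodMap hm2)]
  congr 1
  funext p
  simp [sn_sub]

lemma extendM_lf (μ : Measure (Rd d)) [IsLocallyFiniteMeasure μ] :
    IsLocallyFiniteMeasure (extendM μ) := by
  refine lf_of_good fun n => ?_
  have hsub : Metric.ball (0 : Rd (d + 1)) n ⊆
      {x | (fun k : Fin d => x k.castSucc) ∈ Metric.closedBall (0 : Rd d) n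
        ∧ x (Fin.last d) ∈ Icc (-(n : ℝ)) n} := by
    intro x hx
    rw [mem_ball_zero_iff] at hx
    have hc : ∀ i, |x i| ≤ n := fun i => (norm_le_pi_norm x i).trans hx.le
    refine ⟨?_, abs_le.1 (hc _)⟩
    rw [mem_closedBall_zero_iff, pi_norm_le_iff_of_nonneg (Nat.cast_nonneg n)]
    exact fun k => hc _
  refine (measure_mono hsub).trans_lt ?_
  rw [extendM_apply_rect _ measurableSet_closedBall measurableSet_Icc]
  exact ENNReal.mul_lt_top (bounded_lt_top μ Metric.isBounded_closedBall) (by simp)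

lemma extendM_supp {μ : Measure (Rd d)} (h : zeroInSupport μ) : zeroInSupport (extendM μ) := by
  intro U hU h0
  obtain ⟨r, hr, hrU⟩ := Metric.isOpen_iff.1 hU 0 h0
  have hsub : {x | (fun k : Fin d => x k.castSucc) ∈ Metric.ball (0 : Rd d) r
        ∧ x (Fin.last d) ∈ Ioo (-r) r} ⊆ U := by
    rintro x ⟨h1, h2⟩
    refine hrU ?_
    rw [mem_ball_zero_iff, pi_norm_lt_iff hr] at *
    intro i
    refine Fin.lastCases ?_ (fun k => ?_) i
    · exact abs_lt.2 h2
    · exact h1 k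
  refine lt_of_lt_of_le ?_ (measure_mono hsub)
  rw [extendM_apply_rect _ measurableSet_ball measurableSet_Ioo]
  refine ENNReal.mul_pos (h _ Metric.isOpen_ball (Metric.mem_ball_self hr)).ne' ?_
  rw [Real.volume_Ioo]
  simpa using hr

variable {Ω E : Type*} [MeasurableSpace Ω] [MeasurableSpace E]
  {Θ : Action d E} {X : Ω → E} {ξ : Ω → Measure (Rd d)}

lemma Setup.ext (h : Setup Θ X ξ) : Setup (extAction Θ) X (fun ω => extendM (ξ ω)) where
  hX := h.hX
  hξ := measurable_extendM.comp h.hξ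
  hshift := h.hshift.comp ((measurable_init.comp measurable_fst).prodMk measurable_snd)
  hfin ω := by
    have := h.hfin ω
    exact extendM_lf _

lemma ext_act (v : Rd d) (s : ℝ) (x : E) : (extAction Θ).act (sn v s) x = Θ.act v x := by
  show Θ.act (fun k => sn v s k.castSucc) x = Θ.act v x
  rw [sn_castSucc]

/-- left-hand side for the extension -/
lemma ext_left (h : Setup Θ X ξ)
    {G : (E × Measure (Rd (d + 1))) × (Rd (d + 1) × Rd (d + 1)) → ℝ≥0∞} (hG : Measurable G)
    (ω : Ω) :
    ∫⁻ v, ∫⁻ w, G (((extAction Θ).act v (X ω), shiftM v (extendM (ξ ω))), (w, w - v))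
        ∂volume ∂(extendM (ξ ω))
      = ∫⁻ v, ∫⁻ w, ∫⁻ s, ∫⁻ r, G ((Θ.act v (X ω), extendM (shiftM v (ξ ω))),
          (sn w r, sn (w - v) (r - s))) ∂volume ∂volume ∂volume ∂(ξ ω) := by
  have := h.hfin ω
  have hm : Measurable fun q : Rd (d + 1) × Rd (d + 1) =>
      G (((extAction Θ).act q.1 (X ω), shiftM q.1 (extendM (ξ ω))), (q.2, q.2 - q.1)) :=
    hG.comp (((h.ext.meas0 ω).comp measurable_fst).prodMk
      (measurable_snd.prodMk (measurable_snd.sub measurable_fst)))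
  have hm1 : ∀ v', Measurable fun w =>
      G (((extAction Θ).act v' (X ω), shiftM v' (extendM (ξ ω))), (w, w - v')) :=
    fun v' => hm.comp (measurable_const.prodMk measurable_id)
  rw [lint_ext _ hm.lintegral_prod_right']
  refine lintegral_congr fun v => ?_
  simp_rw [lint_vol (hm1 _)]
  rw [lintegral_lintegral_swap]
  · refine lintegral_congr fun w => lintegral_congr fun s => lintegral_congr fun r => ?_
    rw [ext_act, shiftM_extendM, sn_sub]
  · refine Measurable.aemeasurable ?_
    have h3 : Measurable fun z : (ℝ × Rd d) × ℝ => (sn v z.1.1, sn z.1.2 z.2) :=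
      (measurable_sn.comp (measurable_const.prodMk measurable_fst.fst)).prodMk
        (measurable_sn.comp (measurable_fst.snd.prodMk measurable_snd))
    exact (hm.comp h3).lintegral_prod_right'

/-- right-hand side for the extension -/
lemma ext_right (h : Setup Θ X ξ)
    {G : (E × Measure (Rd (d + 1))) × (Rd (d + 1) × Rd (d + 1)) → ℝ≥0∞} (hG : Measurable G)
    (ω : Ω) :
    ∫⁻ v, ∫⁻ u, G ((X ω, extendM (ξ ω)), (u, v + u)) ∂volume ∂(extendM (ξ ω))
      = ∫⁻ v, ∫⁻ u, ∫⁻ s, ∫⁻ r, G ((X ω, extendM (ξ ω)),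
          (sn u r, sn (v + u) (r - s))) ∂volume ∂volume ∂volume ∂(ξ ω) := by
  have := h.hfin ω
  have hm : Measurable fun q : Rd (d + 1) × Rd (d + 1) =>
      G ((X ω, extendM (ξ ω)), (q.2, q.1 + q.2)) :=
    hG.comp (measurable_const.prodMk
      (measurable_snd.prodMk (measurable_fst.add measurable_snd)))
  have hm1 : ∀ v' : Rd (d + 1), Measurable fun w => G ((X ω, extendM (ξ ω)), (w, v' + w)) :=
    fun v' => hm.comp (measurable_const.prodMk measurable_id)
  rw [lint_ext _ hm.lintegral_prod_right']
  refine lintegral_congr fun v => ?_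
  simp_rw [lint_vol (hm1 _)]
  rw [lintegral_lintegral_swap]
  · refine lintegral_congr fun u => ?_
    rw [← lintegral_neg_eq_self]
    refine lintegral_congr fun s => lintegral_congr fun r => ?_
    rw [sn_add, neg_add_eq_sub]
  · refine Measurable.aemeasurable ?_
    have h3 : Measurable fun z : (ℝ × Rd d) × ℝ => (sn v z.1.1, sn z.1.2 z.2) :=
      (measurable_sn.comp (measurable_const.prodMk measurable_fst.fst)).prodMk
        (measurable_sn.comp (measurable_fst.snd.prodMk measurable_snd))
    exact (hm.comp h3).lintegral_prod_right'

lemma twoPoint_ext (h : Setup Θ X ξ) {P : Measure Ω} (hT : TwoPoint Θ P X ξ) :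
    TwoPoint (extAction Θ) P X (fun ω => extendM (ξ ω)) := by
  intro G hG
  simp_rw [ext_left h hG, ext_right h hG]
  have hm : Measurable fun z : (((E × Measure (Rd d)) × (Rd d × Rd d)) × ℝ) × ℝ =>
      G ((z.1.1.1.1, extendM z.1.1.1.2), (sn z.1.1.2.1 z.2, sn z.1.1.2.2 (z.2 - z.1.2))) := by
    refine hG.comp (Measurable.prodMk ?_ (Measurable.prodMk ?_ ?_))
    · exact measurable_fst.fst.fst.fst.prodMk (measurable_extendM.comp measurable_fst.fst.fst.snd)
    · exact measurable_sn.comp (measurable_fst.fst.snd.fst.prodMk measurable_snd)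
    · exact measurable_sn.comp (measurable_fst.fst.snd.snd.prodMk
        (measurable_snd.sub measurable_fst.snd))
  exact hT (fun p => ∫⁻ s, ∫⁻ r, G ((p.1.1, extendM p.1.2), (sn p.2.1 r, sn p.2.2 (r - s))))
    hm.lintegral_prod_right'.lintegral_prod_right'

lemma unit_integral :
    ∫⁻ s : ℝ, ∫⁻ r : ℝ, ((Icc (0 : ℝ) 1).indicator 1 r * (Icc (0 : ℝ) 1).indicator 1 (r - s)
      : ℝ≥0∞) = 1 := by
  have hI : Measurable ((Icc (0 : ℝ) 1).indicator (1 : ℝ → ℝ≥0∞)) := measurable_ind measurableSet_Icc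
  rw [lintegral_lintegral_swap]
  · have : ∀ r : ℝ, ∫⁻ s : ℝ, ((Icc (0 : ℝ) 1).indicator 1 r
        * (Icc (0 : ℝ) 1).indicator 1 (r - s) : ℝ≥0∞) = (Icc (0 : ℝ) 1).indicator 1 r := by
      intro r
      have h1 : Measurable fun s => (Icc (0 : ℝ) 1).indicator (1 : ℝ → ℝ≥0∞) (r - s) :=
        hI.comp (measurable_const.sub measurable_id)
      rw [lintegral_const_mul _ h1,
        lintegral_sub_left_eq_self ((Icc (0 : ℝ) 1).indicator (1 : ℝ → ℝ≥0∞)) r,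
        lintegral_indicator_one measurableSet_Icc]
      simp
    simp_rw [this]
    rw [lintegral_indicator_one measurableSet_Icc]
    simp
  · exact ((hI.comp measurable_snd).mul
      (hI.comp (measurable_snd.sub measurable_fst))).aemeasurable

lemma twoPoint_of_ext (h : Setup Θ X ξ) {P : Measure Ω}
    (hT : TwoPoint (extAction Θ) P X (fun ω => extendM (ξ ω))) : TwoPoint Θ P X ξ := by
  intro G hG
  have hI : Measurable ((Icc (0 : ℝ) 1).indicator (1 : ℝ → ℝ≥0∞)) := measurable_ind measurableSet_Icc
  have hG' : Measurable fun p : (E × Measure (Rd (d + 1))) × (Rd (d + 1) × Rd (d + 1)) =>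
      G ((p.1.1, rho p.1.2), ((fun k => p.2.1 (Fin.castSucc k)), fun k => p.2.2 (Fin.castSucc k)))
      * ((Icc (0 : ℝ) 1).indicator (1 : ℝ → ℝ≥0∞) (p.2.1 (Fin.last d))
        * (Icc (0 : ℝ) 1).indicator (1 : ℝ → ℝ≥0∞) (p.2.2 (Fin.last d))) := by
    refine Measurable.mul (hG.comp (Measurable.prodMk ?_ (Measurable.prodMk ?_ ?_)))
      (Measurable.mul ?_ ?_)
    · exact measurable_fst.fst.prodMk (measurable_rho.comp measurable_fst.snd)
    · exact measurable_init.comp measurable_snd.fst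
    · exact measurable_init.comp measurable_snd.snd
    · exact hI.comp (measurable_lst.comp measurable_snd.fst)
    · exact hI.comp (measurable_lst.comp measurable_snd.snd)
  have key := hT _ hG'
  simp_rw [ext_left h hG', ext_right h hG'] at key
  simp only [sn_castSucc, sn_last, rho_extendM] at key
  have hpull : ∀ c : ℝ≥0∞, ∫⁻ s : ℝ, ∫⁻ r : ℝ, (c * ((Icc (0 : ℝ) 1).indicator 1 r
      * (Icc (0 : ℝ) 1).indicator 1 (r - s)) : ℝ≥0∞) = c := by
    intro c
    have hmm : Measurable fun z : ℝ × ℝ => ((Icc (0 : ℝ) 1).indicator 1 z.2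
      * (Icc (0 : ℝ) 1).indicator 1 (z.2 - z.1) : ℝ≥0∞) :=
      (hI.comp measurable_snd).mul (hI.comp (measurable_snd.sub measurable_fst))
    have h1 : ∀ s : ℝ, Measurable fun r : ℝ => ((Icc (0 : ℝ) 1).indicator 1 r
      * (Icc (0 : ℝ) 1).indicator 1 (r - s) : ℝ≥0∞) :=
      fun s => hmm.comp (measurable_const.prodMk measurable_id)
    simp_rw [lintegral_const_mul _ (h1 _)]
    rw [lintegral_const_mul _ hmm.lintegral_prod_right', unit_integral, mul_one]
  simp_rw [hpull] at key
  exact key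

end ext

end LT
namespace LT

/-- **Proposition 1.** The pair `(X°,ξ°)` is mass-stationary under `P°` if and only if
`(X°, ξ°⊗λ₁)` is mass-stationary under `P°`, where `ξ°⊗λ₁` is regarded as a random
measure on `ℝ^{d+1}` and the `ℝ^{d+1}`-shifts act on `E` through the first `d`
coordinates. -/
theorem mass_stationary_iff_extension_mass_stationary
    {d : ℕ} {Ω E : Type*} [MeasurableSpace Ω] [MeasurableSpace E]
    (Θ : Action d E) (Pc : Measure Ω) [SigmaFinite Pc]
    (Xc : Ω → E) (ξc : Ω → Measure (Rd d))
    (hXc : Measurable Xc) (hξc : Measurable ξc)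
    (hXcshift : Measurable fun p : Rd d × Ω => Θ.act p.1 (Xc p.2))
    (hfin : ∀ ω, IsLocallyFiniteMeasure (ξc ω))
    (hsupp : ∀ᵐ ω ∂Pc, zeroInSupport (ξc ω))
    (hσ : SigmaFinite (Measure.map (fun ω => (Xc ω, ξc ω)) Pc)) :
    IsMassStationary Θ Pc Xc ξc ↔
      IsMassStationary (extAction Θ) Pc Xc (fun ω => extendM (ξc ω)) := by
  have h : Setup Θ Xc ξc := ⟨hXc, hξc, hXcshift, hfin⟩
  have hσ' : SigmaFinite (Measure.map (fun ω => (Xc ω, extendM (ξc ω))) Pc) := by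
    have hm : Measurable fun p : E × Measure (Rd (d + 1)) => (p.1, rho p.2) :=
      measurable_fst.prodMk (measurable_rho.comp measurable_snd)
    have hm2 : Measurable fun ω => (Xc ω, extendM (ξc ω)) := h.ext.hX.prodMk h.ext.hξ
    refine SigmaFinite.of_map _ hm.aemeasurable ?_
    rw [Measure.map_map hm hm2]
    have : (fun p : E × Measure (Rd (d + 1)) => (p.1, rho p.2)) ∘
        (fun ω => (Xc ω, extendM (ξc ω))) = fun ω => (Xc ω, ξc ω) := by
      funext ω
      simp [rho_extendM]
    rw [this]
    exact hσ
  constructor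
  · intro hM
    exact TwoPoint.massStationary h.ext (hsupp.mono fun ω hω => extendM_supp hω)
      (twoPoint_ext h (twoPoint_of_massStationary h Pc hσ hM))
  · intro hM
    exact TwoPoint.massStationary h hsupp
      (twoPoint_of_ext h (twoPoint_of_massStationary h.ext Pc hσ' hM))

end LT
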